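/- arXiv:2204.11761 — 2 statements merged into one kernel-verified Lean document; each statement's English description precedes it below -/
import Mathlib

section
/- Let N be a positive integer. No two distinct elements of A represent the same right coset of Γ₀(N) in SL₂(ℤ): if M₁, M₂ ∈ A and M₁·M₂⁻¹ ∈ Γ₀(N), then M₁ = M₂. -/
open Matrix CongruenceSubgroup
open scoped MatrixGroups

/-- Admissibility of a choice of representative sets `R c`: for each positive divisor
`c < N` of `N`, with `v = gcd (N/c) c`, the set `R c` consists of nonnegative integers
coprime to `c` forming a complete set of representatives of `(ℤ/vℤ)ˣ`. -/
def AdmissibleReps (N : ℕ) (R : ℕ → Set ℕ) : Prop :=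
  ∀ c : ℕ, c ∣ N → 0 < c → c < N →
    (∀ a ∈ R c, Nat.Coprime a c) ∧
    ∀ u : (ZMod (Nat.gcd (N / c) c))ˣ,
      ∃! a : ℕ, a ∈ R c ∧ (a : ZMod (Nat.gcd (N / c) c)) = (u : ZMod (Nat.gcd (N / c) c))

/-- The set `A` of matrices constructed in the paper: the identity matrix, together with,
for each positive divisor `c < N` of `N` (with `v = gcd (N/c) c`), each `a ∈ R c`, and each
integer `-1 ≤ d < N/v - 1` with `a*d ≡ 1 (mod c)` whenever `a ≠ 0`, the matrix with rows
`(a, (a*d-1)/c)` and `(c, d)`. -/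
def RepSet (N : ℕ) (R : ℕ → Set ℕ) : Set (Matrix (Fin 2) (Fin 2) ℤ) :=
  {1} ∪ {M | ∃ c : ℕ, c ∣ N ∧ 0 < c ∧ c < N ∧ ∃ a ∈ R c, ∃ d : ℤ,
      -1 ≤ d ∧ d < ((N / Nat.gcd (N / c) c : ℕ) : ℤ) - 1 ∧
      (a ≠ 0 → (a : ℤ) * d ≡ 1 [ZMOD (c : ℕ)]) ∧
      M 0 0 = (a : ℤ) ∧ M 0 1 = ((a : ℤ) * d - 1) / (c : ℤ) ∧
      M 1 0 = (c : ℤ) ∧ M 1 1 = d}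

/-!
The right coset of `M` depends only on its lower row `(c, d)` modulo `N`, up to a unit, so
`gcd(c, N)` is an invariant of the coset; for a matrix attached to a divisor `c` of `N` it is `c`
itself. For a common `c`, equal cosets force `d` to agree modulo `N / c`. Hence `a`, which is
inverse to `d` modulo `c`, agrees modulo `v = gcd(N / c, c)`, and therefore exactly. Then `d` agrees
modulo `c` as well, so modulo `lcm(N / c, c) = N / v`, which is the length of the interval
containing `d`.
-/

theorem modEq_of_mul_modEq_one {n x x' y y' : ℤ} (h : x * y ≡ 1 [ZMOD n])
    (h' : x' * y' ≡ 1 [ZMOD n]) (hy : y ≡ y' [ZMOD n]) : x ≡ x' [ZMOD n] :=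
  calc
    x = x * 1 := (mul_one x).symm
    _ ≡ x * (x' * y') [ZMOD n] := h'.symm.mul_left x
    _ = x' * (x * y') := by ring
    _ ≡ x' * (x * y) [ZMOD n] := (hy.symm.mul_left x).mul_left x'
    _ ≡ x' * 1 [ZMOD n] := h.mul_left x'
    _ = x' := mul_one x'

theorem eq_of_modEq_of_mem_Ico {n t x y : ℤ} (h : x ≡ y [ZMOD n]) (hx : x ∈ Set.Ico t (t + n))
    (hy : y ∈ Set.Ico t (t + n)) : x = y := by
  have hlt : |x - y| < n := abs_sub_lt_iff.mpr ⟨by linarith [hx.2, hy.1], by linarith [hx.1, hy.2]⟩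
  exact sub_eq_zero.mp (Int.eq_zero_of_abs_lt_dvd h.symm.dvd hlt)

theorem specialLinearGroup_ext_of_apply_one_zero_ne_zero {K : Type*} [CommRing K] [NoZeroDivisors K]
    {M₁ M₂ : SL(2, K)} (hne : M₁ 1 0 ≠ 0) (h00 : M₁ 0 0 = M₂ 0 0) (h10 : M₁ 1 0 = M₂ 1 0)
    (h11 : M₁ 1 1 = M₂ 1 1) : M₁ = M₂ := by
  have det₁ := M₁.det_coe
  have det₂ := M₂.det_coe
  rw [det_fin_two] at det₁ det₂
  have h01 : M₁ 0 1 = M₂ 0 1 := by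
    apply mul_right_cancel₀ hne
    linear_combination det₂ - det₁ + M₁ 1 1 * h00 + M₂ 0 0 * h11 - M₂ 0 1 * h10
  ext i j
  fin_cases i <;> fin_cases j <;> assumption

theorem apply_zero_zero_mul_apply_one_one_modEq_one (M : SL(2, ℤ)) :
    M 0 0 * M 1 1 ≡ 1 [ZMOD M 1 0] := by
  have hdet := M.det_coe
  rw [det_fin_two] at hdet
  exact (Int.modEq_iff_dvd.mpr ⟨M 0 1, by linear_combination hdet⟩).symm

section Gamma0Coset

variable {N c : ℕ} {M₁ M₂ : SL(2, ℤ)}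

theorem mul_inv_mem_Gamma0_iff :
    M₁ * M₂⁻¹ ∈ Gamma0 N ↔ M₁ 1 1 * M₂ 1 0 ≡ M₁ 1 0 * M₂ 1 1 [ZMOD N] := by
  have hentry : (M₁ * M₂⁻¹) 1 0 = M₁ 1 0 * M₂ 1 1 - M₁ 1 1 * M₂ 1 0 := by
    simp [adjugate_fin_two, mul_apply, sub_eq_add_neg]
  rw [Gamma0_mem, ZMod.intCast_zmod_eq_zero_iff_dvd, hentry, Int.modEq_iff_dvd]

theorem gcd_apply_one_zero_dvd_of_mul_inv_mem_Gamma0 (h : M₁ * M₂⁻¹ ∈ Gamma0 N) :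
    Int.gcd (M₁ 1 0) N ∣ Int.gcd (M₂ 1 0) N := by
  set g := Int.gcd (M₁ 1 0) N
  have hgc : (g : ℤ) ∣ M₁ 1 0 := Int.gcd_dvd_left _ _
  have hgN : (g : ℤ) ∣ N := Int.gcd_dvd_right _ _
  have hmul : (g : ℤ) ∣ M₁ 1 1 * M₂ 1 0 :=
    ((mul_inv_mem_Gamma0_iff.mp h).of_dvd hgN).dvd_iff.mpr (hgc.mul_right _)
  have hcoprime : IsCoprime (g : ℤ) (M₁ 1 1) := (M₁.isCoprime_row 1).of_isCoprime_of_dvd_left hgc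
  exact Int.dvd_gcd (hcoprime.dvd_of_dvd_mul_left hmul) hgN

theorem gcd_apply_one_zero_eq_of_mul_inv_mem_Gamma0 (h : M₁ * M₂⁻¹ ∈ Gamma0 N) :
    Int.gcd (M₁ 1 0) N = Int.gcd (M₂ 1 0) N := by
  have h' : M₂ * M₁⁻¹ ∈ Gamma0 N := by simpa using inv_mem h
  exact Nat.dvd_antisymm (gcd_apply_one_zero_dvd_of_mul_inv_mem_Gamma0 h)
    (gcd_apply_one_zero_dvd_of_mul_inv_mem_Gamma0 h')

theorem apply_one_one_modEq_div_of_mul_inv_mem_Gamma0 (hcN : c ∣ N) (hc : 0 < c)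
    (h₁ : M₁ 1 0 = c) (h₂ : M₂ 1 0 = c) (h : M₁ * M₂⁻¹ ∈ Gamma0 N) :
    M₁ 1 1 ≡ M₂ 1 1 [ZMOD (N / c : ℕ)] := by
  have hcross : c * M₁ 1 1 ≡ c * M₂ 1 1 [ZMOD c * (N / c : ℕ)] := by
    rw [← Nat.cast_mul, Nat.mul_div_cancel' hcN, mul_comm (c : ℤ) (M₁ 1 1)]
    simpa only [h₁, h₂] using mul_inv_mem_Gamma0_iff.mp h
  exact hcross.mul_left_cancel' (by exact_mod_cast hc.ne')

theorem apply_zero_zero_modEq_gcd_of_mul_inv_mem_Gamma0 (hcN : c ∣ N) (hc : 0 < c)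
    (h₁ : M₁ 1 0 = c) (h₂ : M₂ 1 0 = c) (h : M₁ * M₂⁻¹ ∈ Gamma0 N) :
    M₁ 0 0 ≡ M₂ 0 0 [ZMOD (Nat.gcd (N / c) c : ℕ)] := by
  have hvc : ((Nat.gcd (N / c) c : ℕ) : ℤ) ∣ c := by exact_mod_cast Nat.gcd_dvd_right _ _
  have hvq : ((Nat.gcd (N / c) c : ℕ) : ℤ) ∣ (N / c : ℕ) := by exact_mod_cast Nat.gcd_dvd_left _ _
  have hinv₁ := apply_zero_zero_mul_apply_one_one_modEq_one M₁
  have hinv₂ := apply_zero_zero_mul_apply_one_one_modEq_one M₂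
  rw [h₁] at hinv₁
  rw [h₂] at hinv₂
  exact modEq_of_mul_modEq_one (hinv₁.of_dvd hvc) (hinv₂.of_dvd hvc)
    ((apply_one_one_modEq_div_of_mul_inv_mem_Gamma0 hcN hc h₁ h₂ h).of_dvd hvq)

theorem apply_one_one_modEq_div_gcd_of_mul_inv_mem_Gamma0 (hcN : c ∣ N) (hc : 0 < c)
    (h₁ : M₁ 1 0 = c) (h₂ : M₂ 1 0 = c) (h00 : M₁ 0 0 = M₂ 0 0) (h : M₁ * M₂⁻¹ ∈ Gamma0 N) :
    M₁ 1 1 ≡ M₂ 1 1 [ZMOD (N / Nat.gcd (N / c) c : ℕ)] := by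
  have hmod_c : M₁ 1 1 ≡ M₂ 1 1 [ZMOD c] := by
    have hinv₁ := apply_zero_zero_mul_apply_one_one_modEq_one M₁
    have hinv₂ := apply_zero_zero_mul_apply_one_one_modEq_one M₂
    rw [h₁, mul_comm] at hinv₁
    rw [h₂, mul_comm] at hinv₂
    exact modEq_of_mul_modEq_one hinv₁ hinv₂ (by rw [h00])
  have hlcm : N / Nat.gcd (N / c) c = Int.lcm (N / c : ℕ) c := by
    rw [Int.lcm_natCast_natCast, Nat.lcm, Nat.div_mul_cancel hcN]
  rw [hlcm]
  exact Int.modEq_and_modEq_iff_modEq_lcm.mp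
    ⟨apply_one_one_modEq_div_of_mul_inv_mem_Gamma0 hcN hc h₁ h₂ h, hmod_c⟩

end Gamma0Coset

theorem AdmissibleReps.injOn_natCast {N c : ℕ} {R : ℕ → Set ℕ} (hR : AdmissibleReps N R)
    (hcN : c ∣ N) (hc : 0 < c) (hlt : c < N) :
    (R c).InjOn (Nat.cast : ℕ → ZMod (Nat.gcd (N / c) c)) := by
  intro a ha a' ha' haa'
  obtain ⟨hcoprime, hunique⟩ := hR c hcN hc hlt
  have hunit : a.Coprime (Nat.gcd (N / c) c) :=
    (hcoprime a ha).coprime_dvd_right (Nat.gcd_dvd_right _ _)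
  exact (hunique (ZMod.unitOfCoprime a hunit)).unique ⟨ha, rfl⟩ ⟨ha', haa'.symm⟩

/-- `M` is one of the matrices `(a, b; c, d)` that the construction of `RepSet N R` attaches to
the proper divisor `c` of `N`. The formula for `b` and the congruence `a * d ≡ 1` modulo `c` are
left out because they follow from `det M = 1`. -/
structure IsDivisorRep (N : ℕ) (R : ℕ → Set ℕ) (c : ℕ) (M : SL(2, ℤ)) : Prop where
  dvd : c ∣ N
  pos : 0 < c
  lt : c < N
  apply_zero_zero : ∃ a ∈ R c, M 0 0 = (a : ℤ)
  apply_one_zero : M 1 0 = c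
  apply_one_one : M 1 1 ∈ Set.Ico (-1 : ℤ) (-1 + (N / Nat.gcd (N / c) c : ℕ))

theorem eq_one_or_exists_isDivisorRep {N : ℕ} {R : ℕ → Set ℕ} {M : SL(2, ℤ)}
    (h : (M : Matrix (Fin 2) (Fin 2) ℤ) ∈ RepSet N R) :
    M = 1 ∨ ∃ c, IsDivisorRep N R c M := by
  rcases h with hone | ⟨c, hcN, hc, hlt, a, ha, d, hd, hd', -, h00, -, h10, h11⟩
  · exact Or.inl (Subtype.ext hone)
  · refine Or.inr ⟨c, hcN, hc, hlt, ⟨a, ha, h00⟩, h10, ?_⟩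
    rw [h11]
    exact ⟨hd, by linarith⟩

namespace IsDivisorRep

variable {N c : ℕ} {R : ℕ → Set ℕ} {M M₁ M₂ : SL(2, ℤ)}

theorem gcd_apply_one_zero (hM : IsDivisorRep N R c M) : Int.gcd (M 1 0) N = c := by
  rw [hM.apply_one_zero, Int.gcd_natCast_natCast, Nat.gcd_eq_left hM.dvd]

theorem notMem_Gamma0 (hM : IsDivisorRep N R c M) : M ∉ Gamma0 N := by
  rw [Gamma0_mem, hM.apply_one_zero, Int.cast_natCast, ZMod.natCast_eq_zero_iff]
  exact Nat.not_dvd_of_pos_of_lt hM.pos hM.lt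

theorem apply_zero_zero_eq (hM₁ : IsDivisorRep N R c M₁) (hM₂ : IsDivisorRep N R c M₂)
    (hR : (R c).InjOn (Nat.cast : ℕ → ZMod (Nat.gcd (N / c) c)))
    (h : M₁ 0 0 ≡ M₂ 0 0 [ZMOD (Nat.gcd (N / c) c : ℕ)]) : M₁ 0 0 = M₂ 0 0 := by
  obtain ⟨a₁, ha₁, h₁⟩ := hM₁.apply_zero_zero
  obtain ⟨a₂, ha₂, h₂⟩ := hM₂.apply_zero_zero
  rw [h₁, h₂] at h ⊢
  rw [Int.natCast_modEq_iff, ← ZMod.natCast_eq_natCast_iff] at h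
  rw [hR ha₁ ha₂ h]

theorem eq_of_mul_inv_mem_Gamma0 (hM₁ : IsDivisorRep N R c M₁) (hM₂ : IsDivisorRep N R c M₂)
    (hR : (R c).InjOn (Nat.cast : ℕ → ZMod (Nat.gcd (N / c) c)))
    (h : M₁ * M₂⁻¹ ∈ Gamma0 N) : M₁ = M₂ := by
  have h₁ := hM₁.apply_one_zero
  have h₂ := hM₂.apply_one_zero
  have h00 : M₁ 0 0 = M₂ 0 0 :=
    hM₁.apply_zero_zero_eq hM₂ hR
      (apply_zero_zero_modEq_gcd_of_mul_inv_mem_Gamma0 hM₁.dvd hM₁.pos h₁ h₂ h)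
  have h11 : M₁ 1 1 = M₂ 1 1 :=
    eq_of_modEq_of_mem_Ico
      (apply_one_one_modEq_div_gcd_of_mul_inv_mem_Gamma0 hM₁.dvd hM₁.pos h₁ h₂ h00 h)
      hM₁.apply_one_one hM₂.apply_one_one
  have hne : M₁ 1 0 ≠ 0 := by
    rw [h₁]
    exact_mod_cast hM₁.pos.ne'
  exact specialLinearGroup_ext_of_apply_one_zero_ne_zero hne h00 (h₁.trans h₂.symm) h11

end IsDivisorRep

/-- No two distinct elements of `A` represent the same right coset of `Γ₀(N)` in `SL₂(ℤ)`. -/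
theorem repSet_coset_reps_distinct (N : ℕ) (hN : 0 < N)
    (R : ℕ → Set ℕ) (hR : AdmissibleReps N R)
    (M₁ M₂ : SL(2, ℤ))
    (h₁ : (M₁ : Matrix (Fin 2) (Fin 2) ℤ) ∈ RepSet N R)
    (h₂ : (M₂ : Matrix (Fin 2) (Fin 2) ℤ) ∈ RepSet N R)
    (h : M₁ * M₂⁻¹ ∈ Gamma0 N) : M₁ = M₂ := by
  rcases eq_one_or_exists_isDivisorRep h₁ with rfl | ⟨c₁, hM₁⟩ <;>
    rcases eq_one_or_exists_isDivisorRep h₂ with rfl | ⟨c₂, hM₂⟩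
  · rfl
  · exact absurd (by simpa using h) hM₂.notMem_Gamma0
  · exact absurd (by simpa using h) hM₁.notMem_Gamma0
  · obtain rfl : c₁ = c₂ := by
      rw [← hM₁.gcd_apply_one_zero, ← hM₂.gcd_apply_one_zero,
        gcd_apply_one_zero_eq_of_mul_inv_mem_Gamma0 h]
    exact hM₁.eq_of_mul_inv_mem_Gamma0 hM₂ (hR.injOn_natCast hM₁.dvd hM₁.pos hM₁.lt) h
end

section
/- Let N be a positive integer. For every z ∈ ℍ there exist γ ∈ Γ₀(N) and M ∈ A such that M⁻¹·(γ·z) lies in the closure of the standard fundamental domain 𝒟 = {z ∈ ℍ : |z| > 1, |Re(z)| < 1/2} for SL₂(ℤ); that is, the union of the translates M·𝒟̄ over M ∈ A contains a representative of every Γ₀(N)-orbit in ℍ. -/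
open Matrix CongruenceSubgroup
open scoped MatrixGroups

open UpperHalfPlane in
/-- The standard open fundamental domain `𝒟 = {z ∈ ℍ : |z| > 1, |Re z| < 1/2}`
for `SL₂(ℤ)`. -/
def stdFundDom : Set UpperHalfPlane :=
  {z : UpperHalfPlane | 1 < ‖(z : ℂ)‖ ∧ |(z : ℂ).re| < 1 / 2}

/-!
Move `z` into `𝒟̄` by some `g ∈ SL₂(ℤ)` with first column `(p, r)`; it then suffices to find
`M ∈ A` with `M * g ∈ Γ₀(N)`. If `N ∣ r` take `M = 1`. Otherwise put `c = gcd(r, N)`; a matrix `M`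
with first column `(a, c)` and lower right entry `d` works as soon as `d` solves

`(r / c) * d ≡ -p (mod N / c)` and `a * d ≡ 1 (mod c)`.

Since `r / c` and `a` are invertible for the respective moduli, the only obstruction is the
compatibility of the two congruences modulo `v = gcd(N / c, c)`, which reads `a * p ≡ -r / c`. It is
met by the right choice of the class of `a` in `(ℤ/vℤ)ˣ`. The solutions `d` form a class modulo
`lcm(N / c, c) = N / v`, hence one of them lies in `[-1, N / v - 1)`.
-/

section Congruences

variable {m n a b s t : ℤ}

theorem exists_modEq_and_modEq_of_modEq_gcd (h : a ≡ b [ZMOD Int.gcd m n]) :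
    ∃ x, x ≡ a [ZMOD m] ∧ x ≡ b [ZMOD n] := by
  obtain ⟨k, hk⟩ := h.dvd
  rw [Int.gcd_eq_gcd_ab] at hk
  refine ⟨a + m * (Int.gcdA m n * k), by simp, ?_⟩
  have bezout : a + m * (Int.gcdA m n * k) = b + n * (-(Int.gcdB m n * k)) := by
    linear_combination -hk
  simp [bezout]

theorem exists_mem_Ico_modEq (hm : 0 < m) (l a : ℤ) :
    ∃ x ∈ Set.Ico l (l + m), x ≡ a [ZMOD m] := by
  refine ⟨toIcoMod hm l a, toIcoMod_mem_Ico hm l a, ?_⟩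
  simp [toIcoMod, mul_comm]

theorem exists_mul_modEq_one_of_isCoprime (h : IsCoprime s m) : ∃ y, s * y ≡ 1 [ZMOD m] := by
  obtain ⟨y, k, hyk⟩ := h
  exact ⟨y, Int.modEq_iff_dvd.2 ⟨k, by linear_combination -hyk⟩⟩

theorem exists_mul_modEq_and_mul_modEq (hs : IsCoprime s m) (ht : IsCoprime t n)
    (h : a * t ≡ b * s [ZMOD Int.gcd m n]) : ∃ x, s * x ≡ a [ZMOD m] ∧ t * x ≡ b [ZMOD n] := by
  obtain ⟨s', hs'⟩ := exists_mul_modEq_one_of_isCoprime hs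
  obtain ⟨t', ht'⟩ := exists_mul_modEq_one_of_isCoprime ht
  have compatible : a * s' ≡ b * t' [ZMOD Int.gcd m n] := calc
    a * s' = a * s' * 1 := by ring
    _ ≡ a * s' * (t * t') [ZMOD Int.gcd m n] := (ht'.of_dvd (Int.gcd_dvd_right ..)).symm.mul_left _
    _ = a * t * (s' * t') := by ring
    _ ≡ b * s * (s' * t') [ZMOD Int.gcd m n] := h.mul_right _
    _ = b * t' * (s * s') := by ring
    _ ≡ b * t' * 1 [ZMOD Int.gcd m n] := (hs'.of_dvd (Int.gcd_dvd_left ..)).mul_left _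
    _ = b * t' := by ring
  obtain ⟨x, hxm, hxn⟩ := exists_modEq_and_modEq_of_modEq_gcd compatible
  refine ⟨x, ?_, ?_⟩
  · calc s * x ≡ s * (a * s') [ZMOD m] := hxm.mul_left _
      _ = a * (s * s') := by ring
      _ ≡ a * 1 [ZMOD m] := hs'.mul_left _
      _ = a := mul_one a
  · calc t * x ≡ t * (b * t') [ZMOD n] := hxn.mul_left _
      _ = b * (t * t') := by ring
      _ ≡ b * 1 [ZMOD n] := ht'.mul_left _
      _ = b := mul_one b

theorem exists_mem_Ico_lcm_mul_modEq_and_mul_modEq (hm : m ≠ 0) (hn : n ≠ 0)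
    (hs : IsCoprime s m) (ht : IsCoprime t n) (h : a * t ≡ b * s [ZMOD Int.gcd m n]) (l : ℤ) :
    ∃ x ∈ Set.Ico l (l + Int.lcm m n), s * x ≡ a [ZMOD m] ∧ t * x ≡ b [ZMOD n] := by
  obtain ⟨y, hym, hyn⟩ := exists_mul_modEq_and_mul_modEq hs ht h
  have lcm_pos : (0 : ℤ) < Int.lcm m n := mod_cast Int.lcm_pos hm hn
  obtain ⟨x, hx, hxy⟩ := exists_mem_Ico_modEq lcm_pos l y
  obtain ⟨hxm, hxn⟩ := Int.modEq_and_modEq_iff_modEq_lcm.2 hxy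
  exact ⟨x, hx, (hxm.mul_left s).trans hym, (hxn.mul_left t).trans hyn⟩

end Congruences

section SpecialLinearGroup

theorem exists_specialLinearGroup_of_mul_modEq_one {a c d : ℤ} (h : a * d ≡ 1 [ZMOD c]) :
    ∃ M : SL(2, ℤ), M 0 0 = a ∧ M 1 0 = c ∧ M 1 1 = d := by
  obtain ⟨b, hb⟩ := h.symm.dvd
  exact ⟨⟨!![a, b; c, d], by rw [det_fin_two_of]; linear_combination hb⟩, rfl, rfl, rfl⟩

theorem mul_mem_gamma0_iff_dvd {N : ℕ} {M g : SL(2, ℤ)} :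
    M * g ∈ Gamma0 N ↔ (N : ℤ) ∣ M 1 0 * g 0 0 + M 1 1 * g 1 0 := by
  have entry : (M * g) 1 0 = M 1 0 * g 0 0 + M 1 1 * g 1 0 := by
    rw [Matrix.SpecialLinearGroup.coe_mul, mul_apply, Fin.sum_univ_two]
  rw [Gamma0_mem, ← entry, ZMod.intCast_zmod_eq_zero_iff_dvd]

end SpecialLinearGroup

section RepSet

variable {N c : ℕ} {R : ℕ → Set ℕ}

theorem coe_mem_repSet (hcN : c ∣ N) (hc : c < N) {a : ℕ} (ha : a ∈ R c) {M : SL(2, ℤ)}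
    (h00 : M 0 0 = a) (h10 : M 1 0 = c)
    (h11 : M 1 1 ∈ Set.Ico (-1) (((N / Nat.gcd (N / c) c : ℕ) : ℤ) - 1)) :
    (M : Matrix (Fin 2) (Fin 2) ℤ) ∈ RepSet N R := by
  have c_pos : 0 < c := Nat.pos_of_dvd_of_pos hcN (c.zero_le.trans_lt hc)
  have det_M : (a : ℤ) * M 1 1 - 1 = M 0 1 * c := by
    have := M.det_coe
    rw [det_fin_two, h00, h10] at this
    linear_combination this
  refine Or.inr ⟨c, hcN, c_pos, hc, a, ha, M 1 1, h11.1, h11.2, fun _ ↦ ?_, h00, ?_, h10, rfl⟩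
  · exact (Int.modEq_iff_dvd.2 ⟨M 0 1, by rw [det_M, mul_comm]⟩).symm
  · rw [det_M, Int.mul_ediv_cancel _ (mod_cast c_pos.ne')]

namespace AdmissibleReps

theorem exists_mem_mul_modEq (hR : AdmissibleReps N R) (hcN : c ∣ N) (hc : c < N) {p q : ℤ}
    (hp : IsCoprime p (Nat.gcd (N / c) c : ℕ)) (hq : IsCoprime q (Nat.gcd (N / c) c : ℕ)) :
    ∃ a ∈ R c, (a : ℤ) * p ≡ q [ZMOD (Nat.gcd (N / c) c : ℕ)] := by
  have c_pos : 0 < c := Nat.pos_of_dvd_of_pos hcN (c.zero_le.trans_lt hc)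
  obtain ⟨u, hu⟩ := (ZMod.coe_int_isUnit_iff_isCoprime p _).2 hp.symm
  obtain ⟨w, hw⟩ := (ZMod.coe_int_isUnit_iff_isCoprime q _).2 hq.symm
  obtain ⟨a, ⟨ha, hau⟩, -⟩ := (hR c hcN c_pos hc).2 (w * u⁻¹)
  refine ⟨a, ha, (ZMod.intCast_eq_intCast_iff _ _ _).1 ?_⟩
  rw [Int.cast_mul, Int.cast_natCast, hau, ← hu, ← hw, ← Units.val_mul, inv_mul_cancel_right]

theorem exists_mem_exists_mem_Ico_mul_modEq (hR : AdmissibleReps N R) (hcN : c ∣ N) (hc : c < N)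
    {p q : ℤ} (hp : IsCoprime p c) (hq : IsCoprime q (N / c : ℕ)) :
    ∃ a ∈ R c, ∃ d ∈ Set.Ico (-1) (((N / Nat.gcd (N / c) c : ℕ) : ℤ) - 1),
      q * d ≡ -p [ZMOD (N / c : ℕ)] ∧ a * d ≡ 1 [ZMOD c] := by
  have N_pos : 0 < N := c.zero_le.trans_lt hc
  have c_pos : 0 < c := Nat.pos_of_dvd_of_pos hcN N_pos
  have div_pos : 0 < N / c := Nat.div_pos hc.le c_pos
  have lcm_eq : Nat.lcm (N / c) c = N / Nat.gcd (N / c) c := by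
    rw [Nat.lcm, Nat.div_mul_cancel hcN]
  obtain ⟨a, ha, hap⟩ := hR.exists_mem_mul_modEq hcN hc
    (hp.of_isCoprime_of_dvd_right (mod_cast Nat.gcd_dvd_right (N / c) c))
    (hq.neg_left.of_isCoprime_of_dvd_right (mod_cast Nat.gcd_dvd_left (N / c) c))
  have compatible : -p * a ≡ 1 * q [ZMOD Int.gcd (N / c : ℕ) c] := by
    rw [Int.gcd_natCast_natCast]
    simpa [mul_comm] using hap.neg
  obtain ⟨d, hd, hqd, had⟩ := exists_mem_Ico_lcm_mul_modEq_and_mul_modEq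
    (mod_cast div_pos.ne') (mod_cast c_pos.ne') hq
    (Nat.isCoprime_iff_coprime.2 ((hR c hcN c_pos hc).1 a ha)) compatible (-1)
  rw [Int.lcm_natCast_natCast, lcm_eq, neg_add_eq_sub] at hd
  exact ⟨a, ha, d, hd, hqd, had⟩

theorem exists_mem_repSet_mul_mem_gamma0 (hR : AdmissibleReps N R) (hN : 0 < N) (g : SL(2, ℤ)) :
    ∃ M : SL(2, ℤ), (M : Matrix (Fin 2) (Fin 2) ℤ) ∈ RepSet N R ∧ M * g ∈ Gamma0 N := by
  by_cases hNr : (N : ℤ) ∣ g 1 0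
  · exact ⟨1, Or.inl rfl, mul_mem_gamma0_iff_dvd.2 (by simpa using hNr)⟩
  obtain ⟨c, hc⟩ : ∃ c, c = Int.gcd (g 1 0) N := ⟨_, rfl⟩
  have c_dvd_r : (c : ℤ) ∣ g 1 0 := hc ▸ Int.gcd_dvd_left ..
  have c_dvd_N : c ∣ N := Int.natCast_dvd_natCast.1 (hc ▸ Int.gcd_dvd_right ..)
  have c_lt_N : c < N := (Nat.le_of_dvd hN c_dvd_N).lt_of_ne fun h ↦ hNr (h ▸ c_dvd_r)
  have coprime_p : IsCoprime (g 0 0) c := (g.isCoprime_col 0).of_isCoprime_of_dvd_right c_dvd_r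
  have coprime_q : IsCoprime (g 1 0 / c) (N / c : ℕ) := by
    rw [hc, Int.isCoprime_iff_gcd_eq_one, Int.natCast_div]
    exact Int.gcd_ediv_gcd_ediv_gcd (Int.gcd_pos_of_ne_zero_right _ (mod_cast hN.ne'))
  obtain ⟨a, ha, d, hd, hqd, had⟩ :=
    hR.exists_mem_exists_mem_Ico_mul_modEq c_dvd_N c_lt_N coprime_p coprime_q
  obtain ⟨M, h00, h10, rfl⟩ := exists_specialLinearGroup_of_mul_modEq_one had
  refine ⟨M, coe_mem_repSet c_dvd_N c_lt_N ha h00 h10 hd, mul_mem_gamma0_iff_dvd.2 ?_⟩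
  have dvd_div : ((N / c : ℕ) : ℤ) ∣ g 0 0 + M 1 1 * (g 1 0 / c) := by
    simpa [mul_comm, add_comm] using hqd.symm.dvd
  calc (N : ℤ) = c * (N / c : ℕ) := mod_cast (Nat.mul_div_cancel' c_dvd_N).symm
    _ ∣ c * (g 0 0 + M 1 1 * (g 1 0 / c)) := mul_dvd_mul_left _ dvd_div
    _ = M 1 0 * g 0 0 + M 1 1 * g 1 0 := by
      rw [h10, mul_add, mul_left_comm, Int.mul_ediv_cancel' c_dvd_r]

end AdmissibleReps

end RepSet

theorem stdFundDom_eq_fdo : stdFundDom = ModularGroup.fdo := by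
  ext z
  simp [stdFundDom, ModularGroup.fdo, Complex.normSq_eq_norm_sq]

open UpperHalfPlane in
/-- The union of the translates `M·𝒟̄` over `M ∈ A` meets every `Γ₀(N)`-orbit in `ℍ`:
for every `z ∈ ℍ` there are `γ ∈ Γ₀(N)` and `M ∈ A` with `M⁻¹·(γ·z) ∈ 𝒟̄`. -/
theorem repSet_translates_cover (N : ℕ) (hN : 0 < N)
    (R : ℕ → Set ℕ) (hR : AdmissibleReps N R) (z : UpperHalfPlane) :
    ∃ γ ∈ Gamma0 N, ∃ M : SL(2, ℤ),
      (M : Matrix (Fin 2) (Fin 2) ℤ) ∈ RepSet N R ∧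
      (M⁻¹ * (γ : SL(2, ℤ))) • z ∈ closure stdFundDom := by
  obtain ⟨g, hg⟩ := ModularGroup.exists_smul_mem_fd z
  obtain ⟨M, hM, hMg⟩ := hR.exists_mem_repSet_mul_mem_gamma0 hN g
  refine ⟨M * g, hMg, M, hM, ?_⟩
  rwa [inv_mul_cancel_left, stdFundDom_eq_fdo, ← ModularGroup.fd_eq_closure_fdo]
end
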